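/- Let f : ℝ^N → (−∞,∞] be proper and closed with inf f > −∞. For each k ∈ ℕ let h_k : ℝ^N → ℝ be convex and differentiable, let m_k : ℝ^N → (−∞,∞] be proper, closed and convex with |f(x) − m_k(x)| ≤ ω(‖x − x^k‖) for all x ∈ ℝ^N, where ω is a continuous growth function, and suppose x̂^k is a global minimizer of m_k + D_{h_k}(·, x^k). Suppose: (i) (x^k) and (ŷ^k) are bounded sequences in ℝ^N; (ii) m_k(ŷ^k) + D_{h_k}(ŷ^k, x^k) ≤ m_k(x̂^k) + D_{h_k}(x̂^k, x^k) + ε_k with ε_k → 0; (iii) Δ_k := m_k(ŷ^k) + D_{h_k}(ŷ^k, x^k) − f(x^k) → 0; (iv) for all bounded sequences (u^k), (v^k) in ℝ^N, u^k − v^k → 0 if and only if D_{h_k}(u^k, v^k) → 0; and (v) for every subsequence (x^k)_{k∈K} and point x* with x^k → x* and f(x^k) → f(x*) along K, the slopes satisfy |∇f|(x^k) → 0 along K. Then every limit point x* of the sequence (x^k) is a stationary point of f, i.e. its limiting slope satisfies |∇f|⁻(x*) = 0; moreover f(x^k) → f(x*) along any subsequence converging to x*. -/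

import Mathlib

open scoped RealInnerProductSpace
open Filter Topology

/-- The Bregman distance `D_h(x, u) = h x − h u − ⟨∇h u, x − u⟩` associated with `h`. -/
noncomputable def breg {N : ℕ} (h : EuclideanSpace ℝ (Fin N) → ℝ)
    (x u : EuclideanSpace ℝ (Fin N)) : ℝ :=
  h x - h u - ⟪gradient h u, x - u⟫

/-- Convexity for extended-real-valued functions. -/
def ERealConvex {N : ℕ} (f : EuclideanSpace ℝ (Fin N) → EReal) : Prop :=
  ∀ x y : EuclideanSpace ℝ (Fin N), ∀ a b : ℝ, 0 ≤ a → 0 ≤ b → a + b = 1 →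
    f (a • x + b • y) ≤ (a : EReal) * f x + (b : EReal) * f y

/-- The slope `|∇f|(x̄) = limsup_{x → x̄, x ≠ x̄} [f(x̄) − f(x)]₊ / ‖x − x̄‖`. -/
noncomputable def slopeAt {N : ℕ} (f : EuclideanSpace ℝ (Fin N) → EReal)
    (xb : EuclideanSpace ℝ (Fin N)) : EReal :=
  Filter.limsup (fun x => (((max (f xb - f x) 0).toReal / ‖x - xb‖ : ℝ) : EReal)) (𝓝[≠] xb)

/-- The limiting slope `|∇f|⁻(x̄)`: the liminf of the slope over `x → x̄` with `f x → f x̄`. -/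
noncomputable def limitingSlopeAt {N : ℕ} (f : EuclideanSpace ℝ (Fin N) → EReal)
    (xb : EuclideanSpace ℝ (Fin N)) : EReal :=
  Filter.liminf (fun x => slopeAt f x) ((𝓝 xb) ⊓ Filter.comap f (𝓝 (f xb)))

/-
Comparing the inexact minimizer of the `k`-th model with a fixed competitor `z` gives
`f (x k) ≤ f z + ω ‖z - x k‖ + D_{h k}(z, x k) + ε k - Δ k`. With `z` a limit point of `x`, all the
error terms vanish along the subsequence, so lower semicontinuity forces `f (x k) → f z`, and then
the vanishing slopes along `x` realise the liminf in the limiting slope at `z`.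
-/

theorem eq_sub_coe_of_coe_eq_sub {a b : EReal} {r : ℝ} (h : (r : EReal) = a - b) : b = a - r := by
  have hb_top : b ≠ ⊤ := by
    rintro rfl
    simp at h
  have hb_bot : b ≠ ⊥ := by
    rintro rfl
    induction a <;> simp at h
  lift b to ℝ using ⟨hb_top, hb_bot⟩
  rw [← EReal.sub_add_cancel (a := a) (b := b), ← h, EReal.add_sub_cancel_left]

theorem tendsto_of_lowerSemicontinuousAt_of_le_add {X ι : Type*} [TopologicalSpace X]
    {f : X → EReal} {a : X} {l : Filter ι} {x : ι → X} {r : ι → ℝ}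
    (hf : LowerSemicontinuousAt f a) (hx : Tendsto x l (𝓝 a)) (hr : Tendsto r l (𝓝 0))
    (hle : ∀ i, f (x i) ≤ f a + r i) : Tendsto (fun i ↦ f (x i)) l (𝓝 (f a)) := by
  have hbound : Tendsto (fun i ↦ f a + r i) l (𝓝 (f a)) := by
    have hadd : ContinuousAt (fun p : EReal × EReal ↦ p.1 + p.2) (f a, ((0 : ℝ) : EReal)) :=
      EReal.continuousAt_add (Or.inr (EReal.coe_ne_bot 0)) (Or.inr (EReal.coe_ne_top 0))
    simpa [Function.comp_def] using
      hadd.tendsto.comp (tendsto_const_nhds.prodMk_nhds (EReal.tendsto_coe.2 hr))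
  exact tendsto_order.2 ⟨fun b hb ↦ hx.eventually (hf b hb),
    fun b hb ↦ (hbound.eventually_lt_const hb).mono fun i ↦ (hle i).trans_lt⟩

theorem le_add_of_approx_min_model {X : Type*} {f m : X → EReal} {d : X → ℝ} {x y z : X}
    {w ε δ : ℝ} (hmodel : m z - f z ≤ w) (hmin : m y + d y ≤ m z + d z + ε)
    (hδ : (δ : EReal) = m y + d y - f x) :
    f x ≤ f z + ((w + d z + ε - δ : ℝ) : EReal) := by
  have hmz : m z ≤ w + f z :=
    (EReal.sub_le_iff_le_add (Or.inr (EReal.coe_ne_top w)) (Or.inr (EReal.coe_ne_bot w))).1 hmodel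
  calc f x = m y + d y - δ := eq_sub_coe_of_coe_eq_sub hδ
    _ ≤ m z + d z + ε - δ := EReal.sub_le_sub hmin le_rfl
    _ ≤ w + f z + d z + ε - δ := EReal.sub_le_sub (by gcongr) le_rfl
    _ = f z + ((w + d z + ε - δ : ℝ) : EReal) := by
      simp only [EReal.coe_add, EReal.coe_neg, sub_eq_add_neg, add_comm (w : EReal), add_assoc]

theorem tendsto_of_approx_min_model {X ι : Type*} [TopologicalSpace X] {f : X → EReal} {a : X}
    {l : Filter ι} {x y : ι → X} {m : ι → X → EReal} {d : ι → X → ℝ} {w ε Δ : ι → ℝ}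
    (hf : LowerSemicontinuousAt f a) (hx : Tendsto x l (𝓝 a))
    (hw : Tendsto w l (𝓝 0)) (hd : Tendsto (fun i ↦ d i a) l (𝓝 0))
    (hε : Tendsto ε l (𝓝 0)) (hΔ : Tendsto Δ l (𝓝 0))
    (hmodel : ∀ i, m i a - f a ≤ w i)
    (hmin : ∀ i, m i (y i) + d i (y i) ≤ m i a + d i a + ε i)
    (hΔdef : ∀ i, (Δ i : EReal) = m i (y i) + d i (y i) - f (x i)) :
    Tendsto (fun i ↦ f (x i)) l (𝓝 (f a)) := by
  have herr : Tendsto (fun i ↦ w i + d i a + ε i - Δ i) l (𝓝 0) := by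
    simpa using ((hw.add hd).add hε).sub hΔ
  exact tendsto_of_lowerSemicontinuousAt_of_le_add hf hx herr
    fun i ↦ le_add_of_approx_min_model (hmodel i) (hmin i) (hΔdef i)

theorem map_cofinite_of_injective {α β : Type*} {φ : α → β} (hφ : Function.Injective φ) :
    map φ cofinite = cofinite ⊓ 𝓟 (Set.range φ) := by
  rw [← hφ.comap_cofinite_eq, map_comap]

section SeminormedAddCommGroup

variable {E : Type*} [SeminormedAddCommGroup E]

theorem tendsto_comp_norm_sub {ι : Type*} {l : Filter ι} {ω : ℝ → ℝ} {x : ι → E} {a : E}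
    (hω : Tendsto ω (𝓝[≥] 0) (𝓝 0)) (hx : Tendsto x l (𝓝 a)) :
    Tendsto (fun i ↦ ω ‖a - x i‖) l (𝓝 0) := by
  have hnorm : Tendsto (fun i ↦ ‖a - x i‖) l (𝓝 0) := by simpa using (hx.const_sub a).norm
  exact hω.comp (tendsto_nhdsWithin_iff.2 ⟨hnorm, .of_forall fun i ↦ norm_nonneg _⟩)

theorem tendsto_subseq_limit_of_tendsto_bounded {β : Type*} {F : Filter β} {d : ℕ → E → β}
    {x : ℕ → E} {φ : ℕ → ℕ} {a : E} (hxbdd : ∃ C, ∀ k, ‖x k‖ ≤ C)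
    (hd : ∀ u : ℕ → E, (∃ C, ∀ k, ‖u k‖ ≤ C) → Tendsto (fun k ↦ u k - x k) atTop (𝓝 0) →
      Tendsto (fun k ↦ d k (u k)) atTop F)
    (hφ : Function.Injective φ) (hx : Tendsto (fun k ↦ x (φ k)) atTop (𝓝 a)) :
    Tendsto (fun k ↦ d (φ k) a) atTop F := by
  classical
  -- The competitor is `a` along the subsequence and `x` elsewhere, so it is asymptotic to `x`.
  let u : ℕ → E := (Set.range φ).piecewise (fun _ ↦ a) x
  have hu_φ (k : ℕ) : u (φ k) = a := Set.piecewise_eq_of_mem _ _ _ (Set.mem_range_self k)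
  have hu_bdd : ∃ C, ∀ k, ‖u k‖ ≤ C := by
    obtain ⟨C, hC⟩ := hxbdd
    refine ⟨max ‖a‖ C, fun k ↦ ?_⟩
    by_cases hk : k ∈ Set.range φ
    · simp only [u, Set.piecewise_eq_of_mem _ _ _ hk, le_max_left]
    · simp only [u, Set.piecewise_eq_of_notMem _ _ _ hk, le_max_of_le_right (hC k)]
  have hmap : map φ atTop = atTop ⊓ 𝓟 (Set.range φ) := by
    simpa only [Nat.cofinite_eq_atTop] using map_cofinite_of_injective hφ
  have hsub : Tendsto (fun k ↦ a - x k) (atTop ⊓ 𝓟 (Set.range φ)) (𝓝 0) := by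
    rw [← hmap, tendsto_map'_iff]
    simpa [Function.comp_def] using hx.const_sub a
  have hu_sub : Tendsto (fun k ↦ u k - x k) atTop (𝓝 0) := by
    have hpiece : (fun k ↦ u k - x k) = (Set.range φ).piecewise (fun k ↦ a - x k) 0 := by
      ext k
      by_cases hk : k ∈ Set.range φ <;> simp [u, hk]
    rw [hpiece]
    exact hsub.piecewise tendsto_const_nhds
  simpa only [Function.comp_def, hu_φ] using (hd u hu_bdd hu_sub).comp hφ.nat_tendsto_atTop

end SeminormedAddCommGroup

section Slope

variable {N : ℕ} {f : EuclideanSpace ℝ (Fin N) → EReal} {a : EuclideanSpace ℝ (Fin N)}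

-- On `ℝ⁰` the punctured neighbourhoods are empty, and a limsup along the trivial filter is `⊥`.
theorem slopeAt_of_subsingleton [Subsingleton (EuclideanSpace ℝ (Fin N))] : slopeAt f a = ⊥ := by
  rw [slopeAt, discreteTopology_iff_nhds_ne.1 inferInstance a, limsup_bot]

theorem slopeAt_nonneg [Nontrivial (EuclideanSpace ℝ (Fin N))] : 0 ≤ slopeAt f a := by
  have := Module.punctured_nhds_neBot ℝ (EuclideanSpace ℝ (Fin N)) a
  refine le_limsup_of_frequently_le (.of_forall fun y ↦ ?_)
  exact EReal.coe_nonneg.2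
    (div_nonneg (EReal.toReal_nonneg (le_max_right _ _)) (norm_nonneg _))

theorem limitingSlopeAt_eq_zero_of_tendsto {ι : Type*} {l : Filter ι} [l.NeBot]
    {x : ι → EuclideanSpace ℝ (Fin N)} (hx : Tendsto x l (𝓝 a))
    (hfx : Tendsto (fun i ↦ f (x i)) l (𝓝 (f a)))
    (hslope : Tendsto (fun i ↦ slopeAt f (x i)) l (𝓝 0)) : limitingSlopeAt f a = 0 := by
  cases subsingleton_or_nontrivial (EuclideanSpace ℝ (Fin N)) with
  | inl _ =>
    simp only [slopeAt_of_subsingleton] at hslope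
    exact (EReal.bot_ne_zero (tendsto_nhds_unique tendsto_const_nhds hslope)).elim
  | inr _ =>
    have hattentive : Tendsto x l (𝓝 a ⊓ comap f (𝓝 (f a))) :=
      tendsto_inf.2 ⟨hx, tendsto_comap_iff.2 hfx⟩
    apply le_antisymm
    · calc limitingSlopeAt f a ≤ liminf (slopeAt f) (map x l) := liminf_le_liminf_of_le hattentive
        _ = 0 := hslope.liminf_eq
    · exact le_liminf_of_le (h := .of_forall fun _ ↦ slopeAt_nonneg)

end Slope

theorem limit_points_stationary_general {N : ℕ} {f : EuclideanSpace ℝ (Fin N) → EReal}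
    (hfclosed : LowerSemicontinuous f) {x y : ℕ → EuclideanSpace ℝ (Fin N)}
    {m : ℕ → EuclideanSpace ℝ (Fin N) → EReal} {d : ℕ → EuclideanSpace ℝ (Fin N) → ℝ}
    {ω : ℝ → ℝ} (hω : Tendsto ω (𝓝[≥] 0) (𝓝 0))
    (hmodel : ∀ k z, m k z - f z ≤ ω ‖z - x k‖) (hxbdd : ∃ C, ∀ k, ‖x k‖ ≤ C)
    {ε : ℕ → ℝ} (hε : Tendsto ε atTop (𝓝 0))
    (hmin : ∀ k z, m k (y k) + d k (y k) ≤ m k z + d k z + ε k)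
    {Δ : ℕ → ℝ} (hΔdef : ∀ k, (Δ k : EReal) = m k (y k) + d k (y k) - f (x k))
    (hΔ : Tendsto Δ atTop (𝓝 0))
    (hd : ∀ u : ℕ → EuclideanSpace ℝ (Fin N), (∃ C, ∀ k, ‖u k‖ ≤ C) →
      Tendsto (fun k ↦ u k - x k) atTop (𝓝 0) → Tendsto (fun k ↦ d k (u k)) atTop (𝓝 0))
    (hslope : ∀ φ : ℕ → ℕ, StrictMono φ → ∀ xstar : EuclideanSpace ℝ (Fin N),
      Tendsto (fun k ↦ x (φ k)) atTop (𝓝 xstar) →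
      Tendsto (fun k ↦ f (x (φ k))) atTop (𝓝 (f xstar)) →
      Tendsto (fun k ↦ slopeAt f (x (φ k))) atTop (𝓝 0))
    (xstar : EuclideanSpace ℝ (Fin N))
    (hlim : ∃ φ : ℕ → ℕ, StrictMono φ ∧ Tendsto (fun k ↦ x (φ k)) atTop (𝓝 xstar)) :
    limitingSlopeAt f xstar = 0 ∧
      ∀ φ : ℕ → ℕ, StrictMono φ → Tendsto (fun k ↦ x (φ k)) atTop (𝓝 xstar) →
        Tendsto (fun k ↦ f (x (φ k))) atTop (𝓝 (f xstar)) := by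
  have hattentive (φ : ℕ → ℕ) (hφ : StrictMono φ)
      (hx : Tendsto (fun k ↦ x (φ k)) atTop (𝓝 xstar)) :
      Tendsto (fun k ↦ f (x (φ k))) atTop (𝓝 (f xstar)) :=
    tendsto_of_approx_min_model (hfclosed xstar) hx (tendsto_comp_norm_sub hω hx)
      (tendsto_subseq_limit_of_tendsto_bounded hxbdd hd hφ.injective hx)
      (hε.comp hφ.tendsto_atTop) (hΔ.comp hφ.tendsto_atTop)
      (fun k ↦ hmodel (φ k) xstar) (fun k ↦ hmin (φ k) xstar) (fun k ↦ hΔdef (φ k))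
  obtain ⟨φ, hφ, hx⟩ := hlim
  have hfx := hattentive φ hφ hx
  exact ⟨limitingSlopeAt_eq_zero_of_tendsto hx hfx (hslope φ hφ xstar hx hfx), hattentive⟩

/-- **Asymptotic stationarity with a growth function.** Every limit point of the iterates is a
stationary point of `f`, and the convergence is `f`-attentive. -/
theorem limit_points_stationary (N : ℕ)
    (f : EuclideanSpace ℝ (Fin N) → EReal)
    (hfbot : ∀ z, f z ≠ ⊥) (hfproper : ∃ z, f z ≠ ⊤)
    (hfclosed : LowerSemicontinuous f) (hfinf : ⊥ < ⨅ z, f z)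
    (x yh xh : ℕ → EuclideanSpace ℝ (Fin N))
    (h : ℕ → EuclideanSpace ℝ (Fin N) → ℝ)
    (hhconv : ∀ k, ConvexOn ℝ Set.univ (h k)) (hhdiff : ∀ k, Differentiable ℝ (h k))
    (m : ℕ → EuclideanSpace ℝ (Fin N) → EReal)
    (hmbot : ∀ k z, m k z ≠ ⊥) (hmproper : ∀ k, ∃ z, m k z ≠ ⊤)
    (hmclosed : ∀ k, LowerSemicontinuous (m k)) (hmconv : ∀ k, ERealConvex (m k))
    (ω : ℝ → ℝ) (hω0 : ω 0 = 0) (hωnn : ∀ t, 0 ≤ t → 0 ≤ ω t)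
    (hωcont : ContinuousOn ω (Set.Ici 0))
    (hωgrowth : Tendsto (fun t => ω t / t) (𝓝[>] (0:ℝ)) (𝓝 0))
    (hmodel : ∀ k z, f z - m k z ≤ ((ω ‖z - x k‖ : ℝ) : EReal) ∧
                     m k z - f z ≤ ((ω ‖z - x k‖ : ℝ) : EReal))
    (hmin : ∀ k u, m k (xh k) + ((breg (h k) (xh k) (x k) : ℝ) : EReal) ≤
                   m k u + ((breg (h k) u (x k) : ℝ) : EReal))
    -- (i) boundedness
    (hxbdd : ∃ C, ∀ k, ‖x k‖ ≤ C) (hybdd : ∃ C, ∀ k, ‖yh k‖ ≤ C)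
    -- (ii) inexactness vanishes
    (ε : ℕ → ℝ) (hε : Tendsto ε atTop (𝓝 0))
    (hinexact : ∀ k, m k (yh k) + ((breg (h k) (yh k) (x k) : ℝ) : EReal) ≤
      m k (xh k) + ((breg (h k) (xh k) (x k) : ℝ) : EReal) + ((ε k : ℝ) : EReal))
    -- (iii) model improvement vanishes
    (Δ : ℕ → ℝ)
    (hΔdef : ∀ k, ((Δ k : ℝ) : EReal) =
      m k (yh k) + ((breg (h k) (yh k) (x k) : ℝ) : EReal) - f (x k))
    (hΔ : Tendsto Δ atTop (𝓝 0))
    -- (iv) Bregman continuity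
    (hbregcont : ∀ u v : ℕ → EuclideanSpace ℝ (Fin N),
      (∃ C, ∀ k, ‖u k‖ ≤ C) → (∃ C, ∀ k, ‖v k‖ ≤ C) →
      (Tendsto (fun k => u k - v k) atTop (𝓝 0) ↔
        Tendsto (fun k => breg (h k) (u k) (v k)) atTop (𝓝 0)))
    -- (v) slopes vanish along f-attentively convergent subsequences
    (hslope : ∀ (φ : ℕ → ℕ), StrictMono φ → ∀ xstar : EuclideanSpace ℝ (Fin N),
      Tendsto (fun k => x (φ k)) atTop (𝓝 xstar) →
      Tendsto (fun k => f (x (φ k))) atTop (𝓝 (f xstar)) →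
      Tendsto (fun k => slopeAt f (x (φ k))) atTop (𝓝 (0 : EReal))) :
    ∀ xstar : EuclideanSpace ℝ (Fin N),
      (∃ φ : ℕ → ℕ, StrictMono φ ∧ Tendsto (fun k => x (φ k)) atTop (𝓝 xstar)) →
      limitingSlopeAt f xstar = 0 ∧
        ∀ φ : ℕ → ℕ, StrictMono φ → Tendsto (fun k => x (φ k)) atTop (𝓝 xstar) →
          Tendsto (fun k => f (x (φ k))) atTop (𝓝 (f xstar)) := by
  have hω : Tendsto ω (𝓝[≥] 0) (𝓝 0) := by simpa [hω0] using (hωcont 0 Set.self_mem_Ici).tendsto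
  exact limit_points_stationary_general (d := fun k z ↦ breg (h k) z (x k)) hfclosed hω
    (fun k z ↦ (hmodel k z).2) hxbdd hε
    (fun k z ↦ (hinexact k).trans (add_le_add_left (hmin k z) _)) hΔdef hΔ
    (fun u hu ↦ (hbregcont u x hu hxbdd).1) hslope
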